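/- There exists a constant c > 0, depending only on d, K₀, κ, α and ℓ, such that c⁻¹ L(|ξ|⁻¹) ≤ ψ(ξ) ≤ c L(|ξ|⁻¹) for all ξ ∈ ℝ^d with |ξ| ≥ 5. -/

import Mathlib

open MeasureTheory Metric Set Filter
open scoped ENNReal Topology RealInnerProductSpace

noncomputable section

/-- `L(r) = ∫_r^1 ℓ(s)/s ds`. -/
def Lfun (ℓ : ℝ → ℝ) (r : ℝ) : ℝ := ∫ s in r..1, ℓ s / s

/-- `ℓ` varies regularly at `0+` with index `ρ`. -/
def RegVaryAt0 (ℓ : ℝ → ℝ) (ρ : ℝ) : Prop :=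
  ∀ lam : ℝ, 0 < lam →
    Filter.Tendsto (fun r => ℓ (lam * r) / ℓ r) (𝓝[>] (0 : ℝ)) (𝓝 (lam ^ ρ))

/-- `ℓ` is bounded away from `0` and `∞` on compact subsets of `(0,1)`. -/
def LocBddAway (ℓ : ℝ → ℝ) : Prop :=
  ∀ a b : ℝ, 0 < a → a ≤ b → b < 1 →
    ∃ m M : ℝ, 0 < m ∧ ∀ s : ℝ, a ≤ s → s ≤ b → m ≤ ℓ s ∧ ℓ s ≤ M

/-- conditions on the (translation invariant) kernel `k`: measurability, nonnegativity,
symmetry, `∫ (1 ∧ |h|²) k(h) dh ≤ K₀` and `κ⁻¹ ℓ(|h|)|h|^{-d} ≤ k(h) ≤ κ ℓ(|h|)|h|^{-d}`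
for `0 < |h| ≤ 1`. -/
def KernelCondsTI (d : ℕ) (K₀ κ : ℝ) (ℓ : ℝ → ℝ)
    (k : EuclideanSpace ℝ (Fin d) → ℝ) : Prop :=
  Measurable k ∧ (∀ h, 0 ≤ k h) ∧ (∀ h, k h = k (-h)) ∧
  ((∫⁻ h in ({0}ᶜ : Set (EuclideanSpace ℝ (Fin d))),
      ENNReal.ofReal (min 1 (‖h‖ ^ 2) * k h)) ≤ ENNReal.ofReal K₀) ∧
  (∀ h : EuclideanSpace ℝ (Fin d), 0 < ‖h‖ → ‖h‖ ≤ 1 →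
    κ⁻¹ * (ℓ ‖h‖ / ‖h‖ ^ d) ≤ k h ∧ k h ≤ κ * (ℓ ‖h‖ / ‖h‖ ^ d))

/-- the characteristic exponent `ψ(ξ) = ∫ (1 - cos⟨ξ,h⟩) k(h) dh`. -/
def psiFun (d : ℕ) (k : EuclideanSpace ℝ (Fin d) → ℝ)
    (ξ : EuclideanSpace ℝ (Fin d)) : ℝ :=
  ∫ h in ({0}ᶜ : Set (EuclideanSpace ℝ (Fin d))), (1 - Real.cos ⟪ξ, h⟫) * k h

/-- lintegral version of `L`. -/
def Lam (ℓ : ℝ → ℝ) (r : ℝ) : ℝ≥0∞ := ∫⁻ s in Ico r 1, ENNReal.ofReal (ℓ s / s)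

lemma lintegral_scale (F : ℝ → ℝ≥0∞) (hF : Measurable F) {a : ℝ} (ha : 0 < a) :
    ∫⁻ s, F s = ENNReal.ofReal a * ∫⁻ s, F (a * s) := by
  conv_lhs => rw [← Real.smul_map_volume_mul_left ha.ne']
  rw [lintegral_smul_measure, lintegral_map hF (measurable_const_mul a), abs_of_pos ha, smul_eq_mul]

lemma Lam_anti (ℓ : ℝ → ℝ) {r r' : ℝ} (h : r ≤ r') : Lam ℓ r' ≤ Lam ℓ r :=
  lintegral_mono_set (Ico_subset_Ico_left h)

lemma Lam_ne_top {ℓ : ℝ → ℝ} (hℓpos : ∀ s : ℝ, 0 < s → s < 1 → 0 < ℓ s)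
    (hI : ∫⁻ s in Ioo 0 1, ENNReal.ofReal (s * ℓ s) ≠ ∞) {r : ℝ} (hr : 0 < r) :
    Lam ℓ r ≠ ∞ := by
  have h : Lam ℓ r ≤ ENNReal.ofReal (r⁻¹ ^ 2) * ∫⁻ s in Ioo 0 1, ENNReal.ofReal (s * ℓ s) := by
    rw [← lintegral_const_mul' _ _ ENNReal.ofReal_ne_top]
    unfold Lam
    refine (setLIntegral_mono' measurableSet_Ico ?_).trans
      (lintegral_mono_set (fun s hs => ⟨hr.trans_le hs.1, hs.2⟩))
    intro s hs
    rw [← ENNReal.ofReal_mul (by positivity)]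
    apply ENNReal.ofReal_le_ofReal
    have hs0 : 0 < s := hr.trans_le hs.1
    have := hℓpos s hs0 hs.2
    rw [div_le_iff₀ hs0]
    have h1 : 1 ≤ r⁻¹ * s := by rw [inv_mul_eq_div, one_le_div hr]; exact hs.1
    nlinarith [mul_le_mul h1 h1 zero_le_one (by positivity)]
  exact ne_top_of_le_ne_top (ENNReal.mul_ne_top ENNReal.ofReal_ne_top hI) h

/-- positivity of the weight on intervals -/
lemma w_pos {ℓ : ℝ → ℝ} (hℓbdd : LocBddAway ℓ) {a b : ℝ} (ha : 0 < a) (hab : a < b) (hb : b < 1) :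
    ∃ C : ℝ, 0 < C ∧ 1 ≤ ENNReal.ofReal C * ∫⁻ s in Ioo a b, ENNReal.ofReal (ℓ s / s) := by
  obtain ⟨m, M, hm, h⟩ := hℓbdd a b ha hab.le hb
  refine ⟨(m * (b - a))⁻¹, by have := sub_pos.2 hab; positivity, ?_⟩
  have h1 : ENNReal.ofReal (m * (b - a)) ≤ ∫⁻ s in Ioo a b, ENNReal.ofReal (ℓ s / s) := by
    calc ENNReal.ofReal (m * (b - a)) = ∫⁻ s in Ioo a b, ENNReal.ofReal m := by
          simp [ENNReal.ofReal_mul hm.le]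
      _ ≤ _ := by
          refine setLIntegral_mono' measurableSet_Ioo fun s hs => ENNReal.ofReal_le_ofReal ?_
          have hs0 : 0 < s := ha.trans hs.1
          have := h s hs.1.le hs.2.le
          rw [le_div_iff₀ hs0]
          nlinarith [hs.2]
  have hp : 0 < m * (b - a) := mul_pos hm (sub_pos.2 hab)
  calc (1 : ℝ≥0∞) = ENNReal.ofReal (m * (b - a))⁻¹ * ENNReal.ofReal (m * (b - a)) := by
        rw [← ENNReal.ofReal_mul (by positivity), inv_mul_cancel₀ hp.ne', ENNReal.ofReal_one]
    _ ≤ _ := by gcongr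

lemma one_le_Lam {ℓ : ℝ → ℝ} (hℓbdd : LocBddAway ℓ) :
    ∃ C : ℝ, 0 < C ∧ ∀ r ≤ (1 / 5 : ℝ), 1 ≤ ENNReal.ofReal C * Lam ℓ r := by
  obtain ⟨C, hC, h⟩ := w_pos hℓbdd (a := 1 / 5) (b := 1 / 2) (by norm_num) (by norm_num)
    (by norm_num)
  refine ⟨C, hC, fun r hr => h.trans ?_⟩
  gcongr
  refine lintegral_mono_set fun s hs => ⟨hr.trans hs.1.le, hs.2.trans (by norm_num)⟩

lemma lemA {ℓ : ℝ → ℝ} {α : ℝ} (hα₂ : α < 2) (hℓmeas : Measurable ℓ)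
    (hℓpos : ∀ s : ℝ, 0 < s → s < 1 → 0 < ℓ s)
    (hℓbdd : LocBddAway ℓ) (hℓreg : RegVaryAt0 ℓ (-α))
    (hI : ∫⁻ s in Ioo 0 1, ENNReal.ofReal (s * ℓ s) ≠ ∞) :
    ∃ C : ℝ, 0 < C ∧ ∀ r : ℝ, 0 < r → r ≤ 1 / 5 →
      ∫⁻ s in Ioo 0 r, ENNReal.ofReal (s * ℓ s) ≤ ENNReal.ofReal (C * r ^ 2) * Lam ℓ r := by
  have hlt : ((1 / 2 : ℝ)) ^ (-α) < 4 := by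
    rw [one_div, Real.inv_rpow (by norm_num), ← Real.rpow_neg (by norm_num), neg_neg]
    calc (2 : ℝ) ^ α < 2 ^ (2 : ℝ) := Real.rpow_lt_rpow_of_exponent_lt (by norm_num) hα₂
      _ = 4 := by norm_num
  obtain ⟨q, hq1, hq4⟩ := exists_between hlt
  have hq0 : 0 < q := lt_trans (by positivity) hq1
  have hev := (hℓreg (1 / 2) (by norm_num)).eventually (eventually_lt_nhds hq1)
  obtain ⟨s0, hs0, hs⟩ := mem_nhdsGT_iff_exists_Ioo_subset.1 hev
  have hs0 : 0 < s0 := hs0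
  set s1 := min s0 1 with hs1
  have hs1p : 0 < s1 := lt_min hs0 one_pos
  have hs11 : s1 ≤ 1 := min_le_right _ _
  have hq : ∀ s, 0 < s → s < s1 → ℓ (1 / 2 * s) ≤ q * ℓ s := by
    intro s h0 h1
    have := hs ⟨h0, h1.trans_le (min_le_left _ _)⟩
    simp only [mem_ofPred_eq] at this
    rw [div_lt_iff₀ (hℓpos s h0 (h1.trans_le hs11))] at this
    exact this.le
  have hImono : ∀ r ≤ (1 : ℝ), ∫⁻ s in Ioo 0 r, ENNReal.ofReal (s * ℓ s) ≤
      ∫⁻ s in Ioo 0 1, ENNReal.ofReal (s * ℓ s) := fun r hr =>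
    lintegral_mono_set (Ioo_subset_Ioo_right hr)
  have hsmall : ∀ r, 0 < r → 2 * r ≤ s1 → ∫⁻ s in Ioo 0 r, ENNReal.ofReal (s * ℓ s) ≤
      ENNReal.ofReal ((q / (1 - q / 4)) * r ^ 2) * Lam ℓ r := by
    intro r hr hr1
    set x := ∫⁻ s in Ioo 0 r, ENNReal.ofReal (s * ℓ s) with hx
    have hxt : x ≠ ∞ := ne_top_of_le_ne_top hI (hImono r (by linarith))
    set z := ∫⁻ s in Ioo 0 (2 * r), ENNReal.ofReal (s * ℓ s) with hz
    have h1 : x ≤ ENNReal.ofReal (q / 4) * z := by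
      rw [hx, ← lintegral_indicator measurableSet_Ioo,
        lintegral_scale _ (by measurability) (a := 1 / 2) (by norm_num),
        hz, ← lintegral_indicator measurableSet_Ioo, ← lintegral_const_mul' _ _ ENNReal.ofReal_ne_top,
        ← lintegral_const_mul' _ _ ENNReal.ofReal_ne_top]
      refine lintegral_mono fun s => ?_
      by_cases hs : s ∈ Ioo 0 (2 * r)
      · have hs' : 1 / 2 * s ∈ Ioo 0 r := ⟨by linarith [hs.1], by linarith [hs.2]⟩
        simp only [indicator_of_mem hs, indicator_of_mem hs']
        rw [← ENNReal.ofReal_mul (by norm_num), ← ENNReal.ofReal_mul (by positivity)]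
        apply ENNReal.ofReal_le_ofReal
        have := hq s hs.1 (hs.2.trans_le hr1)
        nlinarith [mul_le_mul_of_nonneg_left this hs.1.le]
      · have hs' : 1 / 2 * s ∉ Ioo 0 r := fun h => hs ⟨by linarith [h.1], by linarith [h.2]⟩
        simp only [indicator_of_notMem hs, indicator_of_notMem hs', mul_zero, le_refl]
    have h2 : z ≤ x + ENNReal.ofReal (4 * r ^ 2) * Lam ℓ r := by
      have hU : Ioo 0 (2 * r) ⊆ Ioo 0 r ∪ Ico r (2 * r) := by
        intro s hs
        rcases lt_or_ge s r with h | h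
        · exact Or.inl ⟨hs.1, h⟩
        · exact Or.inr ⟨h, hs.2⟩
      refine (lintegral_mono_set hU).trans ((lintegral_union_le _ _ _).trans ?_)
      gcongr
      unfold Lam
      rw [← lintegral_const_mul' _ _ ENNReal.ofReal_ne_top]
      refine (setLIntegral_mono' measurableSet_Ico ?_).trans
        (lintegral_mono_set (fun s (hs : s ∈ Ico r (2 * r)) => ⟨hs.1, by linarith [hs.2]⟩))
      intro s hs
      have hs0 : 0 < s := hr.trans_le hs.1
      have hl := hℓpos s hs0 (by linarith [hs.2])
      rw [← ENNReal.ofReal_mul (by positivity)]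
      apply ENNReal.ofReal_le_ofReal
      rw [← mul_div_assoc, le_div_iff₀ hs0]
      have : s * s ≤ 4 * r ^ 2 := by nlinarith [hs.2]
      nlinarith
    have hy := Lam_ne_top hℓpos hI hr
    clear_value x
    lift x to NNReal using hxt
    obtain ⟨y, hy'⟩ : ∃ y : NNReal, (y : ℝ≥0∞) = Lam ℓ r := ⟨_, ENNReal.coe_toNNReal hy⟩
    rw [← hy'] at h2 ⊢
    have h3 := h1.trans (mul_le_mul' le_rfl h2)
    rw [← ENNReal.ofReal_coe_nnreal, ← ENNReal.ofReal_coe_nnreal (p := y)] at h3 ⊢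
    rw [← ENNReal.ofReal_mul (by positivity), ← ENNReal.ofReal_add (by positivity) (by positivity),
      ← ENNReal.ofReal_mul (by positivity), ENNReal.ofReal_le_ofReal_iff (by positivity)] at h3
    have hq' : 0 < 1 - q / 4 := by linarith
    rw [← ENNReal.ofReal_mul (by positivity)]
    apply ENNReal.ofReal_le_ofReal
    rw [div_mul_eq_mul_div, div_mul_eq_mul_div, le_div_iff₀ hq']
    nlinarith
  obtain ⟨C1, hC1, hC⟩ := one_le_Lam hℓbdd
  set I1 := (∫⁻ s in Ioo 0 1, ENNReal.ofReal (s * ℓ s)).toReal with hI1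
  have hq' : 0 < 1 - q / 4 := by linarith
  refine ⟨q / (1 - q / 4) + I1 * C1 * (2 / s1) ^ 2, by positivity, fun r hr hr5 => ?_⟩
  rcases le_or_gt (2 * r) s1 with h | h
  · refine (hsmall r hr h).trans ?_
    gcongr
    have : 0 ≤ I1 * C1 * (2 / s1) ^ 2 := by positivity
    linarith
  · calc _ ≤ ∫⁻ s in Ioo 0 1, ENNReal.ofReal (s * ℓ s) := hImono r (by linarith)
      _ = ENNReal.ofReal I1 * 1 := by rw [hI1, ENNReal.ofReal_toReal hI, mul_one]
      _ ≤ ENNReal.ofReal I1 * (ENNReal.ofReal C1 * Lam ℓ r) := by gcongr; exact hC r hr5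
      _ = ENNReal.ofReal (I1 * C1) * Lam ℓ r := by
          rw [← mul_assoc, ← ENNReal.ofReal_mul (by positivity)]
      _ ≤ _ := by
          refine mul_le_mul' (ENNReal.ofReal_le_ofReal ?_) le_rfl
          have h1 : 1 ≤ (2 / s1) ^ 2 * r ^ 2 := by
            rw [← mul_pow]
            apply one_le_pow₀
            rw [div_mul_eq_mul_div, one_le_div hs1p]; exact h.le
          have h2 : 0 ≤ q / (1 - q / 4) * r ^ 2 := by positivity
          have h3 : 0 ≤ I1 * C1 := by positivity
          nlinarith [mul_le_mul_of_nonneg_left h1 h3]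

lemma bad_small {ℓ : ℝ → ℝ} {α : ℝ} (hα₀ : 0 ≤ α) (hℓmeas : Measurable ℓ)
    (hℓpos : ∀ s : ℝ, 0 < s → s < 1 → 0 < ℓ s) (hℓreg : RegVaryAt0 ℓ (-α)) :
    ∃ c0 s1 : ℝ, 0 < c0 ∧ 0 < s1 ∧ s1 ≤ 1 / 8 ∧ ∀ s, 0 < s → s < s1 →
      volume (Icc (1 : ℝ) 8 ∩ {x | ℓ (x * s) < c0 * ℓ s}) ≤ 1 := by
  set c0 : ℝ := 8 ^ (-α) / 2 with hc0
  have hc0p : 0 < c0 := by positivity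
  have hlim : Tendsto (fun s => ∫⁻ x in Icc (1 : ℝ) 8,
      ({x | ℓ (x * s) < c0 * ℓ s} : Set ℝ).indicator (fun _ => (1 : ℝ≥0∞)) x) (𝓝[>] (0 : ℝ))
      (𝓝 (∫⁻ x in Icc (1 : ℝ) 8, 0)) := by
    apply tendsto_lintegral_filter_of_dominated_convergence (fun _ => 1)
    · refine Eventually.of_forall fun s => ?_
      refine measurable_const.indicator ?_
      exact measurableSet_lt (by fun_prop) (by fun_prop)
    · refine Eventually.of_forall fun s => Eventually.of_forall fun x => ?_
      exact indicator_le_self' (by simp) x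
    · simp
    · filter_upwards [ae_restrict_mem measurableSet_Icc] with x hx
      have hx0 : (0 : ℝ) < x := by linarith [hx.1]
      have hlt : c0 < x ^ (-α) := by
        have h1 : (8 : ℝ) ^ (-α) ≤ x ^ (-α) :=
          Real.rpow_le_rpow_of_nonpos hx0 hx.2 (by linarith)
        have h2 : (0 : ℝ) < 8 ^ (-α) := by positivity
        linarith
      have hev := (hℓreg x hx0).eventually (eventually_gt_nhds hlt)
      have hev2 : ∀ᶠ s in 𝓝[>] (0 : ℝ), s ∈ Ioo (0 : ℝ) 1 := Ioo_mem_nhdsGT one_pos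
      refine tendsto_const_nhds.congr' ?_
      filter_upwards [hev, hev2] with s h1 h2
      rw [lt_div_iff₀ (hℓpos s h2.1 h2.2)] at h1
      rw [indicator_of_notMem]
      simp only [mem_ofPred_eq, not_lt]
      exact h1.le
  simp only [lintegral_zero] at hlim
  have hev := hlim.eventually (eventually_lt_nhds (b := (1 : ℝ≥0∞)) one_pos)
  obtain ⟨s0, hs0, hs⟩ := mem_nhdsGT_iff_exists_Ioo_subset.1 hev
  have hs0 : 0 < s0 := hs0
  refine ⟨c0, min s0 (1 / 8), hc0p, lt_min hs0 (by norm_num), min_le_right _ _, ?_⟩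
  intro s h0 h1
  have := hs ⟨h0, h1.trans_le (min_le_left _ _)⟩
  simp only [mem_ofPred_eq] at this
  have hm : MeasurableSet {x | ℓ (x * s) < c0 * ℓ s} :=
    measurableSet_lt (by fun_prop) (by fun_prop)
  rw [lintegral_indicator hm, setLIntegral_one, Measure.restrict_apply hm, inter_comm] at this
  exact this.le

lemma one_sub_cos_nonneg (x : ℝ) : 0 ≤ 1 - Real.cos x := by linarith [Real.cos_le_one x]

lemma avg_cos {x : ℝ} (hx : 1 / 2 ≤ |x|) {B : Set ℝ} (hB : MeasurableSet B)
    (hB1 : volume (Icc (1 : ℝ) 8 ∩ B) ≤ 1) :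
    1 ≤ ∫⁻ y in Icc (1 : ℝ) 8 \ B, ENNReal.ofReal (1 - Real.cos (x * y)) := by
  have hx0 : x ≠ 0 := by rintro rfl; norm_num at hx
  have h1 : ENNReal.ofReal 3 ≤ ∫⁻ y in Icc (1 : ℝ) 8, ENNReal.ofReal (1 - Real.cos (x * y)) := by
    rw [← ofReal_integral_eq_lintegral_ofReal]
    · apply ENNReal.ofReal_le_ofReal
      rw [integral_Icc_eq_integral_Ioc, ← intervalIntegral.integral_of_le (by norm_num)]
      rw [intervalIntegral.integral_sub (by simp)
        ((by fun_prop : Continuous fun y => Real.cos (x * y)).intervalIntegrable _ _)]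
      rw [intervalIntegral.integral_comp_mul_left (fun y => Real.cos y) hx0]
      simp only [intervalIntegral.integral_const, integral_cos, smul_eq_mul]
      have h2 : |x⁻¹ * (Real.sin (x * 8) - Real.sin (x * 1))| ≤ 2 * 2 := by
        rw [abs_mul, abs_inv]
        gcongr
        · rw [inv_le_comm₀ (by positivity) (by norm_num)]; linarith
        · rw [abs_le]
          constructor <;> linarith [Real.sin_le_one (x * 8), Real.sin_le_one (x * 1),
            Real.neg_one_le_sin (x * 8), Real.neg_one_le_sin (x * 1)]
      have := (abs_le.1 h2).2
      linarith
    · exact ((by fun_prop : Continuous fun y => 1 - Real.cos (x * y)).integrableOn_Icc)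
    · exact Eventually.of_forall fun y => one_sub_cos_nonneg _
  have h2 : ∫⁻ y in Icc (1 : ℝ) 8 ∩ B, ENNReal.ofReal (1 - Real.cos (x * y)) ≤ 2 := by
    calc _ ≤ ∫⁻ y in Icc (1 : ℝ) 8 ∩ B, 2 := by
          refine lintegral_mono fun y => ?_
          rw [← ENNReal.ofReal_ofNat]
          exact ENNReal.ofReal_le_ofReal (by linarith [Real.neg_one_le_cos (x * y)])
      _ = 2 * volume (Icc (1 : ℝ) 8 ∩ B) := by simp
      _ ≤ 2 * 1 := by gcongr
      _ = 2 := by simp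
  rw [← lintegral_inter_add_sdiff _ _ hB] at h1
  have h3 : ENNReal.ofReal 3 = 2 + 1 := by rw [ENNReal.ofReal_ofNat]; norm_num
  rw [h3] at h1
  have h4 := h1.trans (add_le_add_left h2 _)
  exact (ENNReal.add_le_add_iff_left (by simp)).1 h4

lemma core {ℓ : ℝ → ℝ} {α : ℝ} (hα₀ : 0 ≤ α) (hℓmeas : Measurable ℓ)
    (hℓpos : ∀ s : ℝ, 0 < s → s < 1 → 0 < ℓ s) (hℓreg : RegVaryAt0 ℓ (-α)) :
    ∃ c0 s1 : ℝ, 0 < c0 ∧ 0 < s1 ∧ s1 ≤ 1 / 8 ∧ ∀ r a, 0 < r → 1 / 2 ≤ |a| * r →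
      ENNReal.ofReal c0 * ∫⁻ s in Ioo r s1, ENNReal.ofReal (ℓ s / s) ≤
        7 * ∫⁻ s in Ioo 0 1, ENNReal.ofReal ((1 - Real.cos (a * s)) * (ℓ s / s)) := by
  obtain ⟨c0, s1, hc0, hs1, hs18, hbad⟩ := bad_small hα₀ hℓmeas hℓpos hℓreg
  refine ⟨c0, s1, hc0, hs1, hs18, fun r a hr har => ?_⟩
  set J := ∫⁻ s in Ioo 0 1, ENNReal.ofReal ((1 - Real.cos (a * s)) * (ℓ s / s)) with hJ
  have hJx : ∀ x ∈ Icc (1 : ℝ) 8, ∫⁻ s in Ioo r s1,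
      ENNReal.ofReal ((1 - Real.cos (a * s * x)) * (ℓ (x * s) / s)) ≤ J := by
    intro x hx
    have hx0 : 0 < x := by linarith [hx.1]
    rw [hJ, ← lintegral_indicator measurableSet_Ioo (f := fun s =>
      ENNReal.ofReal ((1 - Real.cos (a * s)) * (ℓ s / s))),
      lintegral_scale _ ((by fun_prop : Measurable _).indicator measurableSet_Ioo) hx0,
      ← lintegral_indicator measurableSet_Ioo,
      ← lintegral_const_mul' _ _ ENNReal.ofReal_ne_top]
    refine lintegral_mono fun s => ?_
    by_cases hs : s ∈ Ioo r s1
    · have hs0 : 0 < s := hr.trans hs.1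
      have hs' : x * s ∈ Ioo (0 : ℝ) 1 := ⟨by positivity, by nlinarith [hx.2, hs.2]⟩
      simp only [indicator_of_mem hs, indicator_of_mem hs']
      rw [← ENNReal.ofReal_mul hx0.le]
      apply le_of_eq
      congr 1
      rw [show a * (x * s) = a * s * x by ring]
      field_simp
    · simp [indicator_of_notMem hs]
  calc _ = ∫⁻ s in Ioo r s1, ENNReal.ofReal c0 * ENNReal.ofReal (ℓ s / s) := by
        rw [lintegral_const_mul' _ _ ENNReal.ofReal_ne_top]
    _ ≤ ∫⁻ s in Ioo r s1, ∫⁻ x in Icc (1 : ℝ) 8,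
          ENNReal.ofReal ((1 - Real.cos (a * s * x)) * (ℓ (x * s) / s)) := by
        refine setLIntegral_mono' measurableSet_Ioo fun s hs => ?_
        have hs0 : 0 < s := hr.trans hs.1
        have hl := hℓpos s hs0 (by linarith [hs.2])
        have hB : MeasurableSet {x | ℓ (x * s) < c0 * ℓ s} :=
          measurableSet_lt (by fun_prop) (by fun_prop)
        have hx : 1 / 2 ≤ |a * s| := by
          rw [abs_mul, abs_of_pos hs0]
          exact har.trans (by gcongr; exact hs.1.le)
        have h1 := avg_cos hx hB (hbad s hs0 hs.2)
        calc _ = ENNReal.ofReal c0 * ENNReal.ofReal (ℓ s / s) * 1 := by rw [mul_one]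
          _ ≤ ENNReal.ofReal c0 * ENNReal.ofReal (ℓ s / s) *
              ∫⁻ y in Icc (1 : ℝ) 8 \ {x | ℓ (x * s) < c0 * ℓ s},
                ENNReal.ofReal (1 - Real.cos (a * s * y)) := by gcongr
          _ = ∫⁻ y in Icc (1 : ℝ) 8 \ {x | ℓ (x * s) < c0 * ℓ s},
                ENNReal.ofReal (c0 * (ℓ s / s)) * ENNReal.ofReal (1 - Real.cos (a * s * y)) := by
              rw [← ENNReal.ofReal_mul hc0.le, lintegral_const_mul' _ _ ENNReal.ofReal_ne_top]
          _ ≤ ∫⁻ y in Icc (1 : ℝ) 8 \ {x | ℓ (x * s) < c0 * ℓ s},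
                ENNReal.ofReal ((1 - Real.cos (a * s * y)) * (ℓ (y * s) / s)) := by
              refine setLIntegral_mono' (measurableSet_Icc.diff hB) fun y hy => ?_
              rw [← ENNReal.ofReal_mul (by positivity), mul_comm (1 - Real.cos _)]
              apply ENNReal.ofReal_le_ofReal
              refine mul_le_mul_of_nonneg_right ?_ (one_sub_cos_nonneg _)
              rw [← mul_div_assoc]
              have := hy.2
              simp only [mem_ofPred_eq, not_lt] at this
              gcongr
          _ ≤ _ := lintegral_mono_set sdiff_subset
    _ = ∫⁻ x in Icc (1 : ℝ) 8, ∫⁻ s in Ioo r s1,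
          ENNReal.ofReal ((1 - Real.cos (a * s * x)) * (ℓ (x * s) / s)) := by
        apply lintegral_lintegral_swap
        apply Measurable.aemeasurable
        unfold Function.uncurry
        fun_prop
    _ ≤ ∫⁻ x in Icc (1 : ℝ) 8, J := setLIntegral_mono' measurableSet_Icc hJx
    _ = 7 * J := by
        rw [setLIntegral_const, Real.volume_Icc, mul_comm]
        norm_num

lemma lemB {ℓ : ℝ → ℝ} {α : ℝ} (hα₀ : 0 ≤ α) (hℓmeas : Measurable ℓ)
    (hℓpos : ∀ s : ℝ, 0 < s → s < 1 → 0 < ℓ s)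
    (hℓbdd : LocBddAway ℓ) (hℓreg : RegVaryAt0 ℓ (-α))
    (hI : ∫⁻ s in Ioo 0 1, ENNReal.ofReal (s * ℓ s) ≠ ∞) :
    ∃ C : ℝ, 0 < C ∧ ∀ R a : ℝ, 5 ≤ R → R / 2 ≤ |a| → |a| ≤ R →
      Lam ℓ R⁻¹ ≤ ENNReal.ofReal C *
        ∫⁻ s in Ioo 0 1, ENNReal.ofReal ((1 - Real.cos (a * s)) * (ℓ s / s)) := by
  obtain ⟨c0, s1, hc0, hs1, hs18, hcore⟩ := core hα₀ hℓmeas hℓpos hℓreg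
  obtain ⟨C1, hC1, hw1⟩ := w_pos hℓbdd (a := s1 / 2) (b := s1) (by linarith) (by linarith)
    (by linarith)
  obtain ⟨C2, hC2, hw2⟩ := w_pos hℓbdd (a := s1 / 4) (b := s1 / 2) (by linarith) (by linarith)
    (by linarith)
  have hDt := Lam_ne_top hℓpos hI (r := s1 / 2) (by linarith)
  set D := (Lam ℓ (s1 / 2)).toReal with hD
  have hD0 : 0 ≤ D := ENNReal.toReal_nonneg
  have hDe : ENNReal.ofReal D = Lam ℓ (s1 / 2) := ENNReal.ofReal_toReal hDt
  set m : ℝ := 2 / Real.pi ^ 2 * (5 / 8 * s1) ^ 2 with hm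
  have hm0 : 0 < m := by have := Real.pi_pos; positivity
  refine ⟨(1 + D * C1) * (7 / c0) + D * (C2 / m), by positivity, fun R a hR ha1 ha2 => ?_⟩
  have hR0 : 0 < R := by linarith
  set J := ∫⁻ s in Ioo 0 1, ENNReal.ofReal ((1 - Real.cos (a * s)) * (ℓ s / s)) with hJ
  rcases le_or_gt R⁻¹ (s1 / 2) with h | h
  · set X := ∫⁻ s in Ioo R⁻¹ s1, ENNReal.ofReal (ℓ s / s) with hX
    have hXJ : X ≤ ENNReal.ofReal (7 / c0) * J := by
      have := hcore R⁻¹ a (by positivity) (by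
        rw [← div_eq_mul_inv, le_div_iff₀ hR0]; linarith)
      calc X = ENNReal.ofReal (1 / c0) * (ENNReal.ofReal c0 * X) := by
            rw [← mul_assoc, ← ENNReal.ofReal_mul (by positivity), one_div_mul_cancel hc0.ne',
              ENNReal.ofReal_one, one_mul]
        _ ≤ ENNReal.ofReal (1 / c0) * (7 * J) := by gcongr
        _ = _ := by
            rw [← mul_assoc, ← ENNReal.ofReal_ofNat 7, ← ENNReal.ofReal_mul (by positivity)]
            congr 2; ring
    have h1 : 1 ≤ ENNReal.ofReal C1 * X := hw1.trans (by
      gcongr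
      exact lintegral_mono_set (Ioo_subset_Ioo_left h))
    have h2 : Lam ℓ R⁻¹ ≤ X + Lam ℓ (s1 / 2) := by
      have hU : Ico R⁻¹ 1 ⊆ Icc R⁻¹ R⁻¹ ∪ (Ioo R⁻¹ s1 ∪ Ico (s1 / 2) 1) := by
        intro s hs
        rcases eq_or_lt_of_le hs.1 with h0 | h0
        · exact Or.inl ⟨hs.1, h0.ge⟩
        · rcases lt_or_ge s s1 with h' | h'
          · exact Or.inr (Or.inl ⟨h0, h'⟩)
          · exact Or.inr (Or.inr ⟨by linarith, hs.2⟩)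
      refine (lintegral_mono_set hU).trans ((lintegral_union_le _ _ _).trans ?_)
      have h0 : ∫⁻ s in Icc R⁻¹ R⁻¹, ENNReal.ofReal (ℓ s / s) = 0 := by simp
      rw [h0, zero_add]
      exact lintegral_union_le _ _ _
    calc Lam ℓ R⁻¹ ≤ X + Lam ℓ (s1 / 2) * 1 := by rwa [mul_one]
      _ ≤ X + ENNReal.ofReal D * (ENNReal.ofReal C1 * X) := by rw [hDe]; gcongr
      _ = ENNReal.ofReal (1 + D * C1) * X := by
          rw [ENNReal.ofReal_add zero_le_one (by positivity), ENNReal.ofReal_mul hD0,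
            ENNReal.ofReal_one]; ring
      _ ≤ ENNReal.ofReal (1 + D * C1) * (ENNReal.ofReal (7 / c0) * J) := by gcongr
      _ = ENNReal.ofReal ((1 + D * C1) * (7 / c0)) * J := by
          rw [← mul_assoc, ← ENNReal.ofReal_mul (by positivity)]
      _ ≤ _ := by
          refine mul_le_mul' (ENNReal.ofReal_le_ofReal ?_) le_rfl
          have : 0 ≤ D * (C2 / m) := by positivity
          linarith
  · have h1 : ENNReal.ofReal m * ∫⁻ s in Ioo (s1 / 4) (s1 / 2), ENNReal.ofReal (ℓ s / s) ≤ J := by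
      rw [← lintegral_const_mul' _ _ ENNReal.ofReal_ne_top]
      refine (setLIntegral_mono' measurableSet_Ioo ?_).trans (lintegral_mono_set
        (fun s (hs : s ∈ Ioo (s1 / 4) (s1 / 2)) => ⟨by linarith [hs.1], by linarith [hs.2]⟩))
      intro s hs
      have hs0 : 0 < s := by linarith [hs.1]
      have hl := hℓpos s hs0 (by linarith [hs.2])
      rw [← ENNReal.ofReal_mul hm0.le]
      apply ENNReal.ofReal_le_ofReal
      refine mul_le_mul_of_nonneg_right ?_ (by positivity)
      have hRs : R * (s1 / 2) < 1 := by
        rw [lt_inv_comm₀ (by linarith) hR0] at h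
        rw [lt_inv_comm₀ hR0 (by linarith)] at h
        calc R * (s1 / 2) < R * R⁻¹ := by gcongr
          _ = 1 := mul_inv_cancel₀ hR0.ne'
      have habs : |a * s| ≤ 1 := by
        rw [abs_mul, abs_of_pos hs0]
        nlinarith [hs.2]
      have hcos := Real.cos_le_one_sub_mul_cos_sq (x := a * s) (by linarith [Real.pi_gt_three])
      have hlow : 5 / 8 * s1 ≤ |a * s| := by
        rw [abs_mul, abs_of_pos hs0]
        nlinarith [hs.1]
      have hsq : (5 / 8 * s1) ^ 2 ≤ (a * s) ^ 2 := by
        rw [← sq_abs (a * s)]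
        gcongr
      have : m ≤ 2 / Real.pi ^ 2 * (a * s) ^ 2 := by
        rw [hm]; gcongr
      linarith
    set Y := ∫⁻ s in Ioo (s1 / 4) (s1 / 2), ENNReal.ofReal (ℓ s / s)
    calc Lam ℓ R⁻¹ ≤ Lam ℓ (s1 / 2) * 1 := by rw [mul_one]; exact Lam_anti ℓ h.le
      _ ≤ ENNReal.ofReal D * (ENNReal.ofReal C2 * Y) := by rw [hDe]; gcongr
      _ = ENNReal.ofReal (D * (C2 / m)) * (ENNReal.ofReal m * Y) := by
          rw [← mul_assoc, ← mul_assoc, ← ENNReal.ofReal_mul hD0,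
            ← ENNReal.ofReal_mul (by positivity)]
          congr 2
          field_simp
      _ ≤ ENNReal.ofReal (D * (C2 / m)) * J := by gcongr
      _ ≤ _ := by
          refine mul_le_mul' (ENNReal.ofReal_le_ofReal ?_) le_rfl
          have : 0 ≤ (1 + D * C1) * (7 / c0) := by positivity
          linarith

lemma Lfun_eq {ℓ : ℝ → ℝ} (hℓmeas : Measurable ℓ)
    (hℓpos : ∀ s : ℝ, 0 < s → s < 1 → 0 < ℓ s) {r : ℝ} (hr : 0 < r) (hr1 : r ≤ 1) :
    Lfun ℓ r = (Lam ℓ r).toReal := by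
  unfold Lfun Lam
  rw [intervalIntegral.integral_of_le hr1, ← integral_Ico_eq_integral_Ioc,
    integral_eq_lintegral_of_nonneg_ae]
  · filter_upwards [ae_restrict_mem measurableSet_Ico] with s hs
    have hs0 : 0 < s := hr.trans_le hs.1
    exact (div_pos (hℓpos s hs0 hs.2) hs0).le
  · exact (hℓmeas.div measurable_id).aestronglyMeasurable

lemma polar (d : ℕ) (hd : 1 ≤ d) (f : EuclideanSpace ℝ (Fin d) → ℝ≥0∞) (hf : Measurable f) :
    ∫⁻ h, f h = ∫⁻ θ, (∫⁻ s in Ioi (0 : ℝ), ENNReal.ofReal (s ^ (d - 1)) *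
      f (s • (θ : EuclideanSpace ℝ (Fin d))))
      ∂((volume : Measure (EuclideanSpace ℝ (Fin d))).toSphere) := by
  have : Nonempty (Fin d) := ⟨⟨0, hd⟩⟩
  set μ : Measure (EuclideanSpace ℝ (Fin d)) := volume
  have hdim : Module.finrank ℝ (EuclideanSpace ℝ (Fin d)) = d := by simp
  have hmp := μ.measurePreserving_homeomorphUnitSphereProd
  rw [hdim] at hmp
  have hg : Measurable fun p : sphere (0 : EuclideanSpace ℝ (Fin d)) 1 × Ioi (0 : ℝ) =>
      f ((p.2 : ℝ) • (p.1 : EuclideanSpace ℝ (Fin d))) := by fun_prop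
  calc ∫⁻ h, f h ∂μ = ∫⁻ x : ({(0)}ᶜ : Set (EuclideanSpace ℝ (Fin d))), f x.1 ∂(μ.comap (↑)) := by
        rw [lintegral_subtype_comap (measurableSet_singleton _).compl f, restrict_compl_singleton]
    _ = ∫⁻ x : ({(0)}ᶜ : Set (EuclideanSpace ℝ (Fin d))),
          (fun p : sphere (0 : EuclideanSpace ℝ (Fin d)) 1 × Ioi (0 : ℝ) =>
            f ((p.2 : ℝ) • (p.1 : EuclideanSpace ℝ (Fin d))))
          (homeomorphUnitSphereProd _ x) ∂(μ.comap (↑)) := by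
        refine lintegral_congr fun x => ?_
        have hx : ‖(x : EuclideanSpace ℝ (Fin d))‖ ≠ 0 := norm_ne_zero_iff.2 x.2
        simp [smul_smul, mul_inv_cancel₀ hx]
    _ = ∫⁻ p, f ((p.2 : ℝ) • (p.1 : EuclideanSpace ℝ (Fin d)))
          ∂(μ.toSphere.prod (.volumeIoiPow (d - 1))) := hmp.lintegral_comp hg
    _ = _ := by
        rw [lintegral_prod _ hg.aemeasurable]
        refine lintegral_congr fun θ => ?_
        unfold Measure.volumeIoiPow
        rw [lintegral_withDensity_eq_lintegral_mul _ (by fun_prop) (by fun_prop)]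
        simp only [Pi.mul_apply]
        rw [lintegral_subtype_comap measurableSet_Ioi (fun s : ℝ => ENNReal.ofReal (s ^ (d - 1)) *
          f (s • (θ : EuclideanSpace ℝ (Fin d))))]

lemma polar' (d : ℕ) (hd : 1 ≤ d) (ξ : EuclideanSpace ℝ (Fin d)) {T : Set ℝ}
    (hT : MeasurableSet T) (hT0 : T ⊆ Ioi 0) {p g : ℝ → ℝ} (hp : Measurable p)
    (hg : Measurable g) :
    ∫⁻ h in {h : EuclideanSpace ℝ (Fin d) | ‖h‖ ∈ T},
      ENNReal.ofReal (p ⟪ξ, h⟫ * (g ‖h‖ / ‖h‖ ^ d)) =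
    ∫⁻ θ, (∫⁻ s in T, ENNReal.ofReal (p (⟪ξ, (θ : EuclideanSpace ℝ (Fin d))⟫ * s) * (g s / s)))
      ∂((volume : Measure (EuclideanSpace ℝ (Fin d))).toSphere) := by
  have hTm : MeasurableSet {h : EuclideanSpace ℝ (Fin d) | ‖h‖ ∈ T} := measurable_norm hT
  rw [← lintegral_indicator hTm, polar d hd _ (Measurable.indicator (by fun_prop) hTm)]
  refine lintegral_congr fun θ => ?_
  have hin : ∀ F : ℝ → ℝ≥0∞, ∫⁻ s in T, F s = ∫⁻ s in Ioi 0, T.indicator F s := fun F => by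
    rw [setLIntegral_indicator hT, inter_eq_self_of_subset_left hT0]
  rw [hin]
  refine setLIntegral_congr_fun measurableSet_Ioi fun s hs => ?_
  have hs : 0 < s := hs
  have hnorm : ‖s • (θ : EuclideanSpace ℝ (Fin d))‖ = s := by
    rw [norm_smul, norm_eq_of_mem_sphere, mul_one, Real.norm_of_nonneg hs.le]
  by_cases h : s ∈ T
  · rw [indicator_of_mem (by rw [mem_ofPred_eq, hnorm]; exact h), indicator_of_mem h,
      ← ENNReal.ofReal_mul (by positivity), hnorm, inner_smul_right, mul_comm s]
    congr 1
    obtain ⟨n, rfl⟩ : ∃ n, d = n + 1 := ⟨d - 1, by omega⟩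
    simp only [Nat.add_sub_cancel]
    field_simp
    ring
  · rw [indicator_of_notMem (by rw [mem_ofPred_eq, hnorm]; exact h), indicator_of_notMem h, mul_zero]

lemma polar_rad (d : ℕ) (hd : 1 ≤ d) {T : Set ℝ}
    (hT : MeasurableSet T) (hT0 : T ⊆ Ioi 0) {g : ℝ → ℝ} (hg : Measurable g) :
    ∫⁻ h in {h : EuclideanSpace ℝ (Fin d) | ‖h‖ ∈ T}, ENNReal.ofReal (g ‖h‖ / ‖h‖ ^ d) =
    (volume : Measure (EuclideanSpace ℝ (Fin d))).toSphere univ *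
      ∫⁻ s in T, ENNReal.ofReal (g s / s) := by
  have := polar' d hd 0 hT hT0 (p := fun _ => 1) measurable_const hg
  simp only [one_mul, lintegral_const] at this
  rw [this, mul_comm]

lemma I_fin {d : ℕ} (hd : 1 ≤ d) {K₀ κ : ℝ} (hκ : 1 < κ) {ℓ : ℝ → ℝ} (hℓmeas : Measurable ℓ)
    {k : EuclideanSpace ℝ (Fin d) → ℝ} (hk : KernelCondsTI d K₀ κ ℓ k) :
    ∫⁻ s in Ioo 0 1, ENNReal.ofReal (s * ℓ s) ≠ ∞ := by
  have : Nonempty (Fin d) := ⟨⟨0, hd⟩⟩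
  obtain ⟨hkm, hk0, -, hkI, hkb⟩ := hk
  intro htop
  have h1 := polar_rad d hd (T := Ioo 0 1) measurableSet_Ioo (fun s hs => hs.1)
    (g := fun s => s ^ 2 * ℓ s) (by fun_prop)
  have h2 : ∫⁻ s in Ioo (0 : ℝ) 1, ENNReal.ofReal (s ^ 2 * ℓ s / s) = ∞ := by
    rw [← htop]
    refine setLIntegral_congr_fun measurableSet_Ioo fun s hs => ?_
    have := hs.1
    congr 1
    field_simp
  rw [h2, ENNReal.mul_top (by simpa using ⟨by omega, (measure_ball_pos _ _ one_pos).ne'⟩)] at h1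
  have h3 : ∫⁻ h in {h : EuclideanSpace ℝ (Fin d) | ‖h‖ ∈ Ioo (0 : ℝ) 1},
      ENNReal.ofReal (‖h‖ ^ 2 * ℓ ‖h‖ / ‖h‖ ^ d) ≤ ENNReal.ofReal κ * ENNReal.ofReal K₀ := by
    refine le_trans ?_ (mul_le_mul' le_rfl hkI)
    rw [← lintegral_const_mul' _ _ ENNReal.ofReal_ne_top]
    refine (setLIntegral_mono' (measurable_norm measurableSet_Ioo) fun h hh => ?_).trans
      (lintegral_mono_set (fun h (hh : ‖h‖ ∈ Ioo (0 : ℝ) 1) => norm_pos_iff.1 hh.1))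
    have hh : ‖h‖ ∈ Ioo (0 : ℝ) 1 := hh
    rw [← ENNReal.ofReal_mul (by positivity)]
    apply ENNReal.ofReal_le_ofReal
    have hb := (hkb h hh.1 hh.2.le).1
    rw [inv_mul_le_iff₀ (by positivity)] at hb
    have hm : min 1 (‖h‖ ^ 2) = ‖h‖ ^ 2 := min_eq_right (pow_le_one₀ hh.1.le hh.2.le)
    rw [hm, mul_div_assoc]
    calc _ ≤ ‖h‖ ^ 2 * (κ * k h) := by gcongr
      _ = _ := by ring
  rw [h1] at h3
  exact absurd (top_le_iff.1 h3) (ENNReal.mul_ne_top ENNReal.ofReal_ne_top ENNReal.ofReal_ne_top)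

lemma upper (d : ℕ) (hd : 1 ≤ d) (K₀ κ α : ℝ) (hK₀ : 0 < K₀) (hκ : 1 < κ)
    (hα₂ : α < 2) (ℓ : ℝ → ℝ) (hℓmeas : Measurable ℓ)
    (hℓpos : ∀ s : ℝ, 0 < s → s < 1 → 0 < ℓ s)
    (hℓbdd : LocBddAway ℓ) (hℓreg : RegVaryAt0 ℓ (-α))
    (hI : ∫⁻ s in Ioo 0 1, ENNReal.ofReal (s * ℓ s) ≠ ∞) :
    ∃ c : ℝ, 0 < c ∧
      ∀ k : EuclideanSpace ℝ (Fin d) → ℝ, KernelCondsTI d K₀ κ ℓ k →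
        ∀ ξ : EuclideanSpace ℝ (Fin d), 5 ≤ ‖ξ‖ →
          ∫⁻ h in ({0}ᶜ : Set (EuclideanSpace ℝ (Fin d))),
            ENNReal.ofReal ((1 - Real.cos ⟪ξ, h⟫) * k h) ≤
          ENNReal.ofReal c * Lam ℓ (‖ξ‖⁻¹) := by
  obtain ⟨C5, hC5, h5⟩ := one_le_Lam hℓbdd
  obtain ⟨CA, hCA, hA⟩ := lemA hα₂ hℓmeas hℓpos hℓbdd hℓreg hI
  set σ := (volume : Measure (EuclideanSpace ℝ (Fin d))).toSphere univ with hσ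
  have hσt : σ ≠ ∞ := measure_ne_top _ _
  set v := σ.toReal
  have hv0 : 0 ≤ v := ENNReal.toReal_nonneg
  have hv : ENNReal.ofReal v = σ := ENNReal.ofReal_toReal hσt
  refine ⟨v * (κ * CA) + v * (2 * κ) + 2 * K₀ * C5, by positivity, ?_⟩
  rintro k ⟨hkm, hk0, -, hkI, hkb⟩ ξ hξ
  set R := ‖ξ‖ with hR
  have hR0 : 0 < R := by linarith
  have hr0 : 0 < R⁻¹ := by positivity
  have hr5 : R⁻¹ ≤ 1 / 5 := by rw [inv_le_comm₀ hR0 (by norm_num)]; linarith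
  set r := R⁻¹ with hr
  set A := Lam ℓ r with hAdef
  have hU : ({0}ᶜ : Set (EuclideanSpace ℝ (Fin d))) ⊆
      ({h | ‖h‖ ∈ Ioo 0 r} ∪ {h | ‖h‖ ∈ Ico r 1}) ∪ {h | ‖h‖ ∈ Ici 1} := by
    intro h hh
    have h0 : 0 < ‖h‖ := norm_pos_iff.2 hh
    rcases lt_or_ge ‖h‖ r with h1 | h1
    · exact Or.inl (Or.inl ⟨h0, h1⟩)
    · rcases lt_or_ge ‖h‖ 1 with h2 | h2
      · exact Or.inl (Or.inr ⟨h1, h2⟩)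
      · exact Or.inr h2
  have e1 : ∫⁻ h in {h : EuclideanSpace ℝ (Fin d) | ‖h‖ ∈ Ioo 0 r},
      ENNReal.ofReal ((1 - Real.cos ⟪ξ, h⟫) * k h) ≤ ENNReal.ofReal (v * (κ * CA)) * A := by
    have h1 := polar_rad d hd (T := Ioo 0 r) measurableSet_Ioo (fun s hs => hs.1)
      (g := fun s => κ * R ^ 2 * s ^ 2 * ℓ s) (by fun_prop)
    have h2 : ∫⁻ s in Ioo 0 r, ENNReal.ofReal (κ * R ^ 2 * s ^ 2 * ℓ s / s) =
        ENNReal.ofReal (κ * R ^ 2) * ∫⁻ s in Ioo 0 r, ENNReal.ofReal (s * ℓ s) := by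
      rw [← lintegral_const_mul' _ _ ENNReal.ofReal_ne_top]
      refine setLIntegral_congr_fun measurableSet_Ioo fun s hs => ?_
      have := hs.1
      rw [← ENNReal.ofReal_mul (by positivity)]
      congr 1
      field_simp
    calc _ ≤ ∫⁻ h in {h : EuclideanSpace ℝ (Fin d) | ‖h‖ ∈ Ioo 0 r},
          ENNReal.ofReal (κ * R ^ 2 * ‖h‖ ^ 2 * ℓ ‖h‖ / ‖h‖ ^ d) := by
          refine setLIntegral_mono' (measurable_norm measurableSet_Ioo) fun h hh => ?_
          have hh : ‖h‖ ∈ Ioo 0 r := hh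
          have hh1 : ‖h‖ < 1 := by linarith [hh.2]
          have hb := (hkb h hh.1 hh1.le).2
          apply ENNReal.ofReal_le_ofReal
          have hc : 1 - Real.cos ⟪ξ, h⟫ ≤ R ^ 2 * ‖h‖ ^ 2 := by
            have h1 := Real.one_sub_sq_div_two_le_cos (x := ⟪ξ, h⟫)
            have h2 : (⟪ξ, h⟫ : ℝ) ^ 2 ≤ (R * ‖h‖) ^ 2 := by
              rw [← sq_abs]
              gcongr
              exact abs_real_inner_le_norm ξ h
            nlinarith [sq_nonneg (R * ‖h‖)]
          calc _ ≤ R ^ 2 * ‖h‖ ^ 2 * (κ * (ℓ ‖h‖ / ‖h‖ ^ d)) :=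
                mul_le_mul hc hb (hk0 h) (by positivity)
            _ = _ := by ring
      _ = ENNReal.ofReal v * (ENNReal.ofReal (κ * R ^ 2) *
            ∫⁻ s in Ioo 0 r, ENNReal.ofReal (s * ℓ s)) := by rw [h1, h2, hv]
      _ ≤ ENNReal.ofReal v * (ENNReal.ofReal (κ * R ^ 2) * (ENNReal.ofReal (CA * r ^ 2) * A)) := by
          gcongr
          exact hA r hr0 hr5
      _ = _ := by
          rw [← mul_assoc, ← mul_assoc, ← ENNReal.ofReal_mul (by positivity),
            ← ENNReal.ofReal_mul (by positivity)]
          congr 2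
          rw [hr]
          field_simp
  have e2 : ∫⁻ h in {h : EuclideanSpace ℝ (Fin d) | ‖h‖ ∈ Ico r 1},
      ENNReal.ofReal ((1 - Real.cos ⟪ξ, h⟫) * k h) ≤ ENNReal.ofReal (v * (2 * κ)) * A := by
    have h1 := polar_rad d hd (T := Ico r 1) measurableSet_Ico (fun s hs => hr0.trans_le hs.1)
      (g := fun s => 2 * κ * ℓ s) (by fun_prop)
    have h2 : ∫⁻ s in Ico r 1, ENNReal.ofReal (2 * κ * ℓ s / s) = ENNReal.ofReal (2 * κ) * A := by
      rw [hAdef, Lam, ← lintegral_const_mul' _ _ ENNReal.ofReal_ne_top]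
      refine lintegral_congr fun s => ?_
      rw [← ENNReal.ofReal_mul (by positivity), mul_div_assoc]
    calc _ ≤ ∫⁻ h in {h : EuclideanSpace ℝ (Fin d) | ‖h‖ ∈ Ico r 1},
          ENNReal.ofReal (2 * κ * ℓ ‖h‖ / ‖h‖ ^ d) := by
          refine setLIntegral_mono' (measurable_norm measurableSet_Ico) fun h hh => ?_
          have hh : ‖h‖ ∈ Ico r 1 := hh
          have hb := (hkb h (hr0.trans_le hh.1) hh.2.le).2
          apply ENNReal.ofReal_le_ofReal
          have hc : 1 - Real.cos ⟪ξ, h⟫ ≤ 2 := by linarith [Real.neg_one_le_cos ⟪ξ, h⟫]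
          calc _ ≤ 2 * (κ * (ℓ ‖h‖ / ‖h‖ ^ d)) := mul_le_mul hc hb (hk0 h) (by positivity)
            _ = _ := by ring
      _ = ENNReal.ofReal v * (ENNReal.ofReal (2 * κ) * A) := by rw [h1, h2, hv]
      _ = _ := by rw [← mul_assoc, ← ENNReal.ofReal_mul (by positivity)]
  have e3 : ∫⁻ h in {h : EuclideanSpace ℝ (Fin d) | ‖h‖ ∈ Ici 1},
      ENNReal.ofReal ((1 - Real.cos ⟪ξ, h⟫) * k h) ≤ ENNReal.ofReal (2 * K₀ * C5) * A := by
    calc _ ≤ ENNReal.ofReal 2 * ∫⁻ h in ({0}ᶜ : Set (EuclideanSpace ℝ (Fin d))),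
          ENNReal.ofReal (min 1 (‖h‖ ^ 2) * k h) := by
          rw [← lintegral_const_mul' _ _ ENNReal.ofReal_ne_top]
          refine (setLIntegral_mono' (measurable_norm measurableSet_Ici) fun h hh => ?_).trans
            (lintegral_mono_set (fun h (hh : 1 ≤ ‖h‖) => norm_pos_iff.1 (one_pos.trans_le hh)))
          have hh : 1 ≤ ‖h‖ := hh
          rw [← ENNReal.ofReal_mul (by positivity)]
          apply ENNReal.ofReal_le_ofReal
          rw [min_eq_left (one_le_pow₀ hh), one_mul]
          have hc : 1 - Real.cos ⟪ξ, h⟫ ≤ 2 := by linarith [Real.neg_one_le_cos ⟪ξ, h⟫]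
          exact mul_le_mul_of_nonneg_right hc (hk0 h)
      _ ≤ ENNReal.ofReal 2 * ENNReal.ofReal K₀ * 1 := by rw [mul_one]; gcongr
      _ ≤ ENNReal.ofReal 2 * ENNReal.ofReal K₀ * (ENNReal.ofReal C5 * A) := by
          gcongr; exact h5 r hr5
      _ = _ := by
          rw [← mul_assoc, ← ENNReal.ofReal_mul (by positivity), ← ENNReal.ofReal_mul (by positivity)]
  refine (lintegral_mono_set hU).trans ((lintegral_union_le _ _ _).trans ?_)
  refine (add_le_add (lintegral_union_le _ _ _) le_rfl).trans ?_
  rw [ENNReal.ofReal_add (by positivity) (by positivity),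
    ENNReal.ofReal_add (by positivity) (by positivity), add_mul, add_mul]
  exact add_le_add (add_le_add e1 e2) e3

lemma lower (d : ℕ) (hd : 1 ≤ d) (K₀ κ α : ℝ) (hκ : 1 < κ)
    (hα₀ : 0 ≤ α) (ℓ : ℝ → ℝ) (hℓmeas : Measurable ℓ)
    (hℓpos : ∀ s : ℝ, 0 < s → s < 1 → 0 < ℓ s)
    (hℓbdd : LocBddAway ℓ) (hℓreg : RegVaryAt0 ℓ (-α))
    (hI : ∫⁻ s in Ioo 0 1, ENNReal.ofReal (s * ℓ s) ≠ ∞) :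
    ∃ c : ℝ, 0 < c ∧
      ∀ k : EuclideanSpace ℝ (Fin d) → ℝ, KernelCondsTI d K₀ κ ℓ k →
        ∀ ξ : EuclideanSpace ℝ (Fin d), 5 ≤ ‖ξ‖ →
          Lam ℓ (‖ξ‖⁻¹) ≤ ENNReal.ofReal c *
          ∫⁻ h in ({0}ᶜ : Set (EuclideanSpace ℝ (Fin d))),
            ENNReal.ofReal ((1 - Real.cos ⟪ξ, h⟫) * k h) := by
  obtain ⟨CB, hCB, hB⟩ := lemB hα₀ hℓmeas hℓpos hℓbdd hℓreg hI
  set b : ℝ := (Measure.toSphereBallBound (Module.finrank ℝ (EuclideanSpace ℝ (Fin d))) 1 : ℝ) *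
    (volume : Measure (EuclideanSpace ℝ (Fin d))).real (ball 0 1) with hb
  have hb0 : 0 < b := by
    refine mul_pos (by exact_mod_cast Measure.toSphereBallBound_pos _ _) ?_
    exact ENNReal.toReal_pos (measure_ball_pos _ _ one_pos).ne' measure_ball_lt_top.ne
  refine ⟨b⁻¹ * CB * κ, by positivity, ?_⟩
  rintro k ⟨hkm, hk0, -, hkI, hkb⟩ ξ hξ
  set R := ‖ξ‖ with hR
  have hR0 : 0 < R := by linarith
  set A := Lam ℓ R⁻¹ with hAdef
  set Ψ := ∫⁻ h in ({0}ᶜ : Set (EuclideanSpace ℝ (Fin d))),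
            ENNReal.ofReal ((1 - Real.cos ⟪ξ, h⟫) * k h) with hΨ
  set J : ℝ → ℝ≥0∞ := fun a =>
    ∫⁻ s in Ioo 0 1, ENNReal.ofReal ((1 - Real.cos (a * s)) * (ℓ s / s)) with hJ
  have h1 := polar' d hd ξ (T := Ioo 0 1) measurableSet_Ioo (fun s hs => hs.1)
      (p := fun x => 1 - Real.cos x) (by fun_prop) hℓmeas
  have h2 : ∫⁻ h in {h : EuclideanSpace ℝ (Fin d) | ‖h‖ ∈ Ioo (0 : ℝ) 1},
      ENNReal.ofReal ((1 - Real.cos ⟪ξ, h⟫) * (ℓ ‖h‖ / ‖h‖ ^ d)) ≤ ENNReal.ofReal κ * Ψ := by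
    rw [hΨ, ← lintegral_const_mul' _ _ ENNReal.ofReal_ne_top]
    refine (setLIntegral_mono' (measurable_norm measurableSet_Ioo) fun h hh => ?_).trans
      (lintegral_mono_set (fun h (hh : ‖h‖ ∈ Ioo (0 : ℝ) 1) => norm_pos_iff.1 hh.1))
    have hh : ‖h‖ ∈ Ioo (0 : ℝ) 1 := hh
    rw [← ENNReal.ofReal_mul (by positivity)]
    apply ENNReal.ofReal_le_ofReal
    have hb := (hkb h hh.1 hh.2.le).1
    rw [inv_mul_le_iff₀ (by positivity)] at hb
    calc _ ≤ (1 - Real.cos ⟪ξ, h⟫) * (κ * k h) :=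
          mul_le_mul_of_nonneg_left hb (one_sub_cos_nonneg _)
      _ = _ := by ring
  set e : sphere (0 : EuclideanSpace ℝ (Fin d)) 1 := ⟨R⁻¹ • ξ, by
    rw [mem_sphere_zero_iff_norm, norm_smul, norm_inv, Real.norm_of_nonneg hR0.le,
      inv_mul_cancel₀ hR0.ne']⟩ with he
  set S := (volume : Measure (EuclideanSpace ℝ (Fin d))).toSphere with hS
  have h3 : ENNReal.ofReal b ≤ S (ball e 1) := by
    have := Measure.toSphereBallBound_mul_measure_unitBall_le_toSphere_ball
      (volume : Measure (EuclideanSpace ℝ (Fin d))) one_pos e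
    refine le_trans (le_of_eq ?_) this
    rw [hb, ENNReal.ofReal_mul (by positivity), ENNReal.ofReal_coe_nnreal, Measure.real,
      ENNReal.ofReal_toReal measure_ball_lt_top.ne]
  have h4 : ∀ θ ∈ ball e 1, A ≤ ENNReal.ofReal CB * J ⟪ξ, (θ : EuclideanSpace ℝ (Fin d))⟫ := by
    intro θ hθ
    have hθ1 : ‖(θ : EuclideanSpace ℝ (Fin d))‖ = 1 := norm_eq_of_mem_sphere θ
    have he1 : ‖(e : EuclideanSpace ℝ (Fin d))‖ = 1 := norm_eq_of_mem_sphere e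
    have hd1 : ‖(θ : EuclideanSpace ℝ (Fin d)) - e‖ < 1 := by
      rw [mem_ball, Subtype.dist_eq, dist_eq_norm] at hθ
      exact hθ
    have hin : (⟪ξ, (θ : EuclideanSpace ℝ (Fin d))⟫ : ℝ) =
        R * ⟪(θ : EuclideanSpace ℝ (Fin d)), (e : EuclideanSpace ℝ (Fin d))⟫ := by
      rw [real_inner_comm, he]
      simp only
      rw [inner_smul_right, mul_inv_cancel_left₀ hR0.ne']
    have hsq := norm_sub_sq_real (θ : EuclideanSpace ℝ (Fin d)) (e : EuclideanSpace ℝ (Fin d))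
    rw [hθ1, he1] at hsq
    have hge : (1 : ℝ) / 2 ≤ ⟪(θ : EuclideanSpace ℝ (Fin d)), (e : EuclideanSpace ℝ (Fin d))⟫ := by
      nlinarith [norm_nonneg ((θ : EuclideanSpace ℝ (Fin d)) - e)]
    apply hB R _ hξ
    · rw [hin, abs_mul, abs_of_pos hR0]
      have := le_abs_self (⟪(θ : EuclideanSpace ℝ (Fin d)), (e : EuclideanSpace ℝ (Fin d))⟫ : ℝ)
      nlinarith
    · refine (abs_real_inner_le_norm _ _).trans ?_
      rw [hθ1, mul_one]
  have h5 : ENNReal.ofReal b * A ≤ ENNReal.ofReal CB * (ENNReal.ofReal κ * Ψ) := by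
    calc _ ≤ S (ball e 1) * A := by gcongr
      _ = ∫⁻ θ in ball e 1, A ∂S := by rw [setLIntegral_const, mul_comm]
      _ ≤ ∫⁻ θ in ball e 1, ENNReal.ofReal CB * J ⟪ξ, (θ : EuclideanSpace ℝ (Fin d))⟫ ∂S :=
          setLIntegral_mono' measurableSet_ball h4
      _ ≤ ∫⁻ θ, ENNReal.ofReal CB * J ⟪ξ, (θ : EuclideanSpace ℝ (Fin d))⟫ ∂S :=
          setLIntegral_le_lintegral _ _
      _ = ENNReal.ofReal CB * ∫⁻ θ, J ⟪ξ, (θ : EuclideanSpace ℝ (Fin d))⟫ ∂S :=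
          lintegral_const_mul' _ _ ENNReal.ofReal_ne_top
      _ ≤ _ := by
          gcongr
          rw [← h1]
          exact h2
  calc A = ENNReal.ofReal b⁻¹ * (ENNReal.ofReal b * A) := by
        rw [← mul_assoc, ← ENNReal.ofReal_mul (by positivity), inv_mul_cancel₀ hb0.ne',
          ENNReal.ofReal_one, one_mul]
    _ ≤ ENNReal.ofReal b⁻¹ * (ENNReal.ofReal CB * (ENNReal.ofReal κ * Ψ)) := by gcongr
    _ = _ := by
        rw [← mul_assoc, ← mul_assoc, ← ENNReal.ofReal_mul (by positivity),
          ← ENNReal.ofReal_mul (by positivity)]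

/-- There exists `c > 0`, depending only on `d, K₀, κ, α, ℓ`, such that
`c⁻¹ L(|ξ|⁻¹) ≤ ψ(ξ) ≤ c L(|ξ|⁻¹)` for all `ξ ∈ ℝ^d` with `|ξ| ≥ 5`. -/
theorem statement2 (d : ℕ) (hd : 1 ≤ d) (K₀ κ α : ℝ) (hK₀ : 0 < K₀) (hκ : 1 < κ)
    (hα₀ : 0 ≤ α) (hα₂ : α < 2) (ℓ : ℝ → ℝ) (hℓmeas : Measurable ℓ)
    (hℓpos : ∀ s : ℝ, 0 < s → s < 1 → 0 < ℓ s)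
    (hℓbdd : LocBddAway ℓ) (hℓreg : RegVaryAt0 ℓ (-α)) :
    ∃ c : ℝ, 0 < c ∧
      ∀ k : EuclideanSpace ℝ (Fin d) → ℝ, KernelCondsTI d K₀ κ ℓ k →
        ∀ ξ : EuclideanSpace ℝ (Fin d), 5 ≤ ‖ξ‖ →
          c⁻¹ * Lfun ℓ (‖ξ‖⁻¹) ≤ psiFun d k ξ ∧ psiFun d k ξ ≤ c * Lfun ℓ (‖ξ‖⁻¹) := by
  by_cases hI : ∫⁻ s in Ioo 0 1, ENNReal.ofReal (s * ℓ s) = ∞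
  · exact ⟨1, one_pos, fun k hk => absurd hI (I_fin hd hκ hℓmeas hk)⟩
  obtain ⟨cu, hcu, hu⟩ := upper d hd K₀ κ α hK₀ hκ hα₂ ℓ hℓmeas hℓpos hℓbdd hℓreg hI
  obtain ⟨cl, hcl, hl⟩ := lower d hd K₀ κ α hκ hα₀ ℓ hℓmeas hℓpos hℓbdd hℓreg hI
  refine ⟨cu + cl, by positivity, fun k hk ξ hξ => ?_⟩
  have h1 := hu k hk ξ hξ
  have h2 := hl k hk ξ hξ
  have hR0 : 0 < ‖ξ‖ := by linarith
  have hr0 : 0 < ‖ξ‖⁻¹ := by positivity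
  have hr1 : ‖ξ‖⁻¹ ≤ 1 := inv_le_one_of_one_le₀ (by linarith)
  have hA := Lam_ne_top hℓpos hI hr0
  rw [Lfun_eq hℓmeas hℓpos hr0 hr1]
  have hpsi : psiFun d k ξ = (∫⁻ h in ({0}ᶜ : Set (EuclideanSpace ℝ (Fin d))),
      ENNReal.ofReal ((1 - Real.cos ⟪ξ, h⟫) * k h)).toReal := by
    unfold psiFun
    have hkm := hk.1
    rw [integral_eq_lintegral_of_nonneg_ae]
    · exact Eventually.of_forall fun h => mul_nonneg (one_sub_cos_nonneg _) (hk.2.1 h)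
    · exact (by fun_prop : Measurable _).aestronglyMeasurable
  rw [hpsi]
  have hΨ := ne_top_of_le_ne_top (ENNReal.mul_ne_top ENNReal.ofReal_ne_top hA) h1
  have h1' := ENNReal.toReal_mono (ENNReal.mul_ne_top ENNReal.ofReal_ne_top hA) h1
  have h2' := ENNReal.toReal_mono (ENNReal.mul_ne_top ENNReal.ofReal_ne_top hΨ) h2
  rw [ENNReal.toReal_mul, ENNReal.toReal_ofReal hcu.le] at h1'
  rw [ENNReal.toReal_mul, ENNReal.toReal_ofReal hcl.le] at h2'
  constructor
  · rw [inv_mul_le_iff₀ (by positivity)]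
    refine h2'.trans (mul_le_mul_of_nonneg_right (by linarith) ENNReal.toReal_nonneg)
  · exact h1'.trans (mul_le_mul_of_nonneg_right (by linarith) ENNReal.toReal_nonneg)
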